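/- Suppose the invertible RDS φ on 𝕊¹ is contractible and admits a reverse-stationary probability measure ρ that is atomless and has full support. Then φ is synchronising. -/

import Mathlib

open MeasureTheory Filter Topology Set ENNReal

noncomputable section

/-- The natural projection `π : ℝ → 𝕊¹ = ℝ/ℤ`. -/
def circleProj (x : ℝ) : UnitAddCircle := (x : UnitAddCircle)

/-- `f` is an orientation-preserving homeomorphism of the circle: it admits a strictly
monotone degree-one lift. -/
def OrientPreserving (f : UnitAddCircle ≃ₜ UnitAddCircle) : Prop :=
  ∃ F : ℝ → ℝ, StrictMono F ∧ (∀ x : ℝ, F (x + 1) = F x + 1) ∧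
    ∀ x : ℝ, f (circleProj x) = circleProj (F x)

/-- The anticlockwise distance `d₊(x,y) = min {r ≥ 0 : π(x' + r) = y}` (`x'` any lift of `x`). -/
def dPlus (x y : UnitAddCircle) : ℝ :=
  sInf {r : ℝ | 0 ≤ r ∧ ∃ x' : ℝ, circleProj x' = x ∧ circleProj (x' + r) = y}

/-- An invertible random dynamical system on the circle, in discrete or continuous time,
driven by a stationary memoryless noise process. -/
structure RDS (Ω : Type) [m : MeasurableSpace Ω] where
  /-- the time set `𝕋⁺`: either `ℕ ∪ {0}` or `[0,∞)`, viewed inside `ℝ` -/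
  T : Set ℝ
  T_cases : T = Set.range (fun n : ℕ => (n : ℝ)) ∨ T = Set.Ici (0 : ℝ)
  /-- the filtration -/
  F : ℝ → MeasurableSpace Ω
  F_le : ∀ t ∈ T, F t ≤ m
  F_mono : ∀ s ∈ T, ∀ t ∈ T, s ≤ t → F s ≤ F t
  /-- the probability measure -/
  P : Measure Ω
  P_prob : IsProbabilityMeasure P
  /-- the time-shift maps on the noise space -/
  θ : ℝ → Ω → Ω
  θ_zero : θ 0 = id
  θ_add : ∀ s ∈ T, ∀ t ∈ T, θ (s + t) = θ t ∘ θ s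
  θ_preserving : ∀ t ∈ T, MeasurePreserving (θ t) P P
  θ_adapted : ∀ s ∈ T, ∀ t ∈ T, @Measurable Ω Ω (F (s + t)) (F s) (θ t)
  θ_indep : ∀ t ∈ T, ∀ E A : Set Ω, MeasurableSet[F t] E →
    MeasurableSet[⨆ s ∈ T, F s] A → P (E ∩ θ t ⁻¹' A) = P E * P A
  /-- the random homeomorphisms -/
  φ : ℝ → Ω → UnitAddCircle ≃ₜ UnitAddCircle
  φ_orient : ∀ t ∈ T, ∀ ω, OrientPreserving (φ t ω)
  φ_meas : ∀ t ∈ T, @Measurable (Ω × UnitAddCircle) UnitAddCircle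
    ((F t).prod inferInstance) inferInstance (fun p => φ t p.1 p.2)
  φ_zero : ∀ ω, φ 0 ω = Homeomorph.refl UnitAddCircle
  φ_cocycle : ∀ s ∈ T, ∀ t ∈ T, ∀ ω x, φ (s + t) ω x = φ t (θ s ω) (φ s ω x)
  φ_cadlag_right : ∀ ω, ∀ t ∈ T, ∀ tn : ℕ → ℝ, (∀ n, tn n ∈ T) → Antitone tn →
    Tendsto tn atTop (𝓝 t) → ∀ (xn : ℕ → UnitAddCircle) (x : UnitAddCircle),
      Tendsto xn atTop (𝓝 x) →
      Tendsto (fun n => φ (tn n) ω (xn n)) atTop (𝓝 (φ t ω x))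
  /-- the left-limit maps -/
  φ_left_lim : ℝ → Ω → UnitAddCircle → UnitAddCircle
  φ_cadlag_left : ∀ ω, ∀ t ∈ T, ∀ tn : ℕ → ℝ, (∀ n, tn n ∈ T) → StrictMono tn →
    Tendsto tn atTop (𝓝 t) → ∀ (xn : ℕ → UnitAddCircle) (x : UnitAddCircle),
      Tendsto xn atTop (𝓝 x) →
      Tendsto (fun n => φ (tn n) ω (xn n)) atTop (𝓝 (φ_left_lim t ω x))

/-- A probability measure on the circle is atomless if every singleton is null. -/
def Atomless (ρ : Measure UnitAddCircle) : Prop := ∀ x, ρ {x} = 0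

/-- A measure on the circle has full support. -/
def FullSupport (ρ : Measure UnitAddCircle) : Prop :=
  ∀ U : Set UnitAddCircle, IsOpen U → U.Nonempty → 0 < ρ U

/-- The (topological) support of a measure on the circle. -/
def msupport (ρ : Measure UnitAddCircle) : Set UnitAddCircle :=
  {x | ∀ U : Set UnitAddCircle, IsOpen U → x ∈ U → 0 < ρ U}

namespace RDS

variable {Ω : Type} [m : MeasurableSpace Ω] (S : RDS Ω)

/-- the future σ-algebra `𝓕₊ = σ(𝓕_t : t ∈ 𝕋⁺)`. -/
def Fplus : MeasurableSpace Ω := ⨆ t ∈ S.T, S.F t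

/-- The filter "t → ∞ along the time set 𝕋⁺". -/
def tFilter : Filter ℝ := atTop ⊓ 𝓟 S.T

/-- two-point contractibility. -/
def Contractible : Prop := ∀ x y : UnitAddCircle, x ≠ y →
  0 < S.P {ω | ∃ t ∈ S.T, dist (S.φ t ω x) (S.φ t ω y) < dist x y}

/-- compressibility. -/
def Compressible : Prop := ∀ x y : UnitAddCircle, x ≠ y →
  0 < S.P {ω | ∃ t ∈ S.T, dPlus (S.φ t ω x) (S.φ t ω y) < dPlus x y}

/-- `p` is a deterministic fixed point. -/
def DetFixedPoint (p : UnitAddCircle) : Prop :=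
  ∀ᵐ ω ∂S.P, ∀ t ∈ S.T, S.φ t ω p = p

/-- `A` is forward-invariant. -/
def ForwardInvariant (A : Set UnitAddCircle) : Prop :=
  ∀ᵐ ω ∂S.P, ∀ t ∈ S.T, ⇑(S.φ t ω) '' A ⊆ A

/-- reverse-minimal dynamics: the only open forward-invariant sets are `∅` and `𝕊¹`. -/
def ReverseMinimal : Prop :=
  ∀ A : Set UnitAddCircle, IsOpen A → S.ForwardInvariant A → A = ∅ ∨ A = Set.univ

/-- synchronisation. -/
def Synchronising : Prop := ∀ x y : UnitAddCircle,
  S.P {ω | Tendsto (fun t => dist (S.φ t ω x) (S.φ t ω y)) S.tFilter (𝓝 0)} = 1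

/-- everywhere local stability. -/
def EverywhereLocallyStable : Prop := ∀ x : UnitAddCircle,
  S.P {ω | ∃ U : Set UnitAddCircle, IsOpen U ∧ x ∈ U ∧
    Tendsto (fun t => volume (⇑(S.φ t ω) '' U)) S.tFilter (𝓝 0)} = 1

/-- stable synchronisation. -/
def StablySynchronising : Prop := S.Synchronising ∧ S.EverywhereLocallyStable

/-- `ρ` is reverse-stationary: `ρ(A) = ∫ ρ(φ(t,ω)A) ℙ(dω)` for all `t ∈ 𝕋⁺`, Borel `A`. -/
def ReverseStationary (ρ : Measure UnitAddCircle) : Prop :=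
  ∀ t ∈ S.T, ∀ A : Set UnitAddCircle, MeasurableSet A →
    ρ A = ∫⁻ ω, ρ (⇑(S.φ t ω) '' A) ∂S.P

/-- `r` is a crack point of `ω`. -/
def CrackPoint (ω : Ω) (r : UnitAddCircle) : Prop :=
  ∀ G : Set UnitAddCircle, IsClosed G → r ∉ G →
    Tendsto (fun t => volume (⇑(S.φ t ω) '' G)) S.tFilter (𝓝 0)

/-- the set of contractive sample points. -/
def Ωc : Set Ω := {ω | ∃ r, S.CrackPoint ω r}

/-- the reverse transition probabilities `φ̄ₓᵗ(A) = ℙ(ω : φ(t,ω)⁻¹(x) ∈ A)`. -/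
def revTrans (t : ℝ) (x : UnitAddCircle) (A : Set UnitAddCircle) : ℝ≥0∞ :=
  S.P {ω | (S.φ t ω).symm x ∈ A}

/-- the forward transition probabilities `φₓᵗ(A) = ℙ(ω : φ(t,ω)x ∈ A)`. -/
def fwdTrans (t : ℝ) (x : UnitAddCircle) (A : Set UnitAddCircle) : ℝ≥0∞ :=
  S.P {ω | S.φ t ω x ∈ A}

/-- `ρ` is stationary for a transition family `ν`. -/
def StationaryFor (ν : ℝ → UnitAddCircle → Set UnitAddCircle → ℝ≥0∞)
    (ρ : Measure UnitAddCircle) : Prop :=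
  ∀ t ∈ S.T, ∀ A : Set UnitAddCircle, MeasurableSet A → ρ A = ∫⁻ x, ν t x A ∂ρ

/-- `ρ` is ergodic for a transition family `ν`. -/
def ErgodicFor (ν : ℝ → UnitAddCircle → Set UnitAddCircle → ℝ≥0∞)
    (ρ : Measure UnitAddCircle) : Prop :=
  S.StationaryFor ν ρ ∧ ∀ A : Set UnitAddCircle, MeasurableSet A →
    (∀ t ∈ S.T, ∀ᵐ x ∂ρ, x ∈ A → ν t x A = 1) → ρ A = 0 ∨ ρ A = 1

end RDS

/-! Let `f (x, y)` be the `ρ`-mass of the anticlockwise arc from `x` to `y`. A homeomorphism which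
preserves orientation maps this arc to the arc between the images of `x` and `y`, so
reverse-stationarity says that the mean of `f` along the two-point motion is constant. As variances
are nonnegative, the mean of `V = f * (1 - f)` does not increase: `V` is excessive. Being the
product of the masses of the two arcs cut out by `x` and `y`, it is continuous (`ρ` is atomless) and
vanishes exactly on the diagonal (`ρ` has full support).

Let `u` be the limit of the decreasing means of `V` at integer times. It is upper semicontinuous
and does not decrease in mean along the two-point motion, so its maximum points form a nonempty
closed set in which the motion almost surely stays. On this compact set the distance attains its
minimum, and contractibility forces a minimiser onto the diagonal, where `u = 0`. Hence `u = 0`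
everywhere, and the maximal inequality for excessive functions upgrades the convergence of the
means of `V` to almost sure convergence. -/

open ProbabilityTheory
open scoped AddConstMap

theorem tendsto_dist_of_tendsto_nhds {X ι Y : Type*} [PseudoMetricSpace X] [CompactSpace X]
    [TopologicalSpace Y] [T2Space Y] {V : X × X → Y} {c : Y} {l : Filter ι} {f g : ι → X}
    (hV : Continuous V) (hdiag : V ⁻¹' {c} ⊆ diagonal X)
    (h : Tendsto (fun i => V (f i, g i)) l (𝓝 c)) :
    Tendsto (fun i => dist (f i) (g i)) l (𝓝 0) := by
  refine (tendsto_uniformity_iff_dist_tendsto_zero (f := fun i => (f i, g i))).1 ?_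
  have hcomap := tendsto_comap_iff.2 h
  rw [hV.isClosedMap.comap_nhds_eq hV] at hcomap
  exact (hcomap.mono_right (nhdsSet_mono hdiag)).mono_right nhdsSet_diagonal_eq_uniformity.le

theorem lintegral_prodMk_of_indepFun {Ω α β : Type*} [MeasurableSpace Ω] [mα : MeasurableSpace α]
    [mβ : MeasurableSpace β] {μ : Measure Ω} [IsFiniteMeasure μ] {X : Ω → α} {Y : Ω → β}
    (hXY : IndepFun X Y μ) (hX : Measurable X) (hY : Measurable Y) {H : α × β → ℝ≥0∞}
    (hH : Measurable H) :
    ∫⁻ ω, H (X ω, Y ω) ∂μ = ∫⁻ ω, ∫⁻ ω', H (X ω', Y ω) ∂μ ∂μ := by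
  calc ∫⁻ ω, H (X ω, Y ω) ∂μ = ∫⁻ z, H z ∂(μ.map X).prod (μ.map Y) := by
        rw [← hXY.map_prod_eq_prod_map_map hX.aemeasurable hY.aemeasurable,
          lintegral_map hH (hX.prodMk hY)]
    _ = ∫⁻ ω, ∫⁻ x, H (x, Y ω) ∂μ.map X ∂μ := by
        rw [lintegral_prod_symm' _ hH, lintegral_map hH.lintegral_prod_left' hY]
    _ = ∫⁻ ω, ∫⁻ ω', H (X ω', Y ω) ∂μ ∂μ :=
        lintegral_congr fun ω => lintegral_map (hH.comp measurable_prodMk_right) hX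

theorem integral_mul_one_sub_le {Ω : Type*} [MeasurableSpace Ω] {μ : Measure Ω}
    [IsProbabilityMeasure μ] {X : Ω → ℝ} (hX : MemLp X 2 μ) :
    ∫ ω, X ω * (1 - X ω) ∂μ ≤ (∫ ω, X ω ∂μ) * (1 - ∫ ω, X ω ∂μ) := by
  have hvar := variance_nonneg X μ
  simp only [variance_eq_sub hX, Pi.pow_apply] at hvar
  have hsplit : ∫ ω, X ω * (1 - X ω) ∂μ = ∫ ω, X ω ∂μ - ∫ ω, X ω ^ 2 ∂μ := by
    rw [← integral_sub (hX.integrable one_le_two) hX.integrable_sq]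
    exact integral_congr_ae (ae_of_all _ fun ω => by ring)
  linarith

theorem measurable_prodMap_uncurry {α β γ : Type*} {_ : MeasurableSpace α}
    [MeasurableSpace β] [MeasurableSpace γ] {f : α → β → γ}
    (hf : Measurable (Function.uncurry f)) :
    Measurable fun x : α × (β × β) => Prod.map (f x.1) (f x.1) x.2 :=
  (hf.comp (measurable_fst.prodMk measurable_snd.fst)).prodMk
    (hf.comp (measurable_fst.prodMk measurable_snd.snd))

section ArcMass

variable {p : ℝ}

theorem measurableSet_coe_image {s : Set ℝ} (hs : MeasurableSet s)
    (hinj : InjOn ((↑) : ℝ → AddCircle p) s) : MeasurableSet ((↑) '' s : Set (AddCircle p)) :=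
  hs.image_of_continuousOn_injOn (AddCircle.continuous_mk' p).continuousOn hinj

variable [Fact (0 < p)]

theorem injOn_coe_Ioc {a b : ℝ} (hb : b ≤ a + p) :
    InjOn ((↑) : ℝ → AddCircle p) (Ioc a b) := fun _ hx _ hy h =>
  (AddCircle.coe_eq_coe_iff_of_mem_Ioc (Ioc_subset_Ioc_right hb hx)
    (Ioc_subset_Ioc_right hb hy)).1 h

variable (ρ : Measure (AddCircle p))

/-- The `p`-periodic measure on `ℝ` which restricts on each interval `(n * p, n * p + p]` to the
lift of a measure `ρ` on the circle. -/
def periodicExtension : Measure ℝ :=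
  Measure.sum fun n : ℤ => ρ.map fun x => (AddCircle.equivIoc p (n • p) x : ℝ)

theorem periodicExtension_apply_of_injOn {s : Set ℝ} (hs : MeasurableSet s)
    (hinj : InjOn ((↑) : ℝ → AddCircle p) s) : periodicExtension ρ s = ρ ((↑) '' s) := by
  let lift (n : ℤ) (x : AddCircle p) : ℝ := AddCircle.equivIoc p (n • p) x
  have hcoe (n : ℤ) (x : AddCircle p) : (lift n x : AddCircle p) = x := AddCircle.coe_equivIoc
  have hlift (n : ℤ) : Measurable (lift n) :=
    measurable_subtype_coe.comp (AddCircle.measurableEquivIoc p (n • p)).measurable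
  have hdisj : Pairwise (Function.onFun Disjoint fun n : ℤ => lift n ⁻¹' s) := by
    intro n k hnk
    refine disjoint_left.2 fun x hxn hxk => ?_
    have heq : lift n x = lift k x := hinj hxn hxk ((hcoe n x).trans (hcoe k x).symm)
    have hmem (j : ℤ) : lift j x ∈ Ioc (j • p) ((j + 1) • p) := by
      simpa only [add_one_zsmul] using (AddCircle.equivIoc p (j • p) x).2
    exact disjoint_left.1 (pairwise_disjoint_Ioc_zsmul p hnk) (hmem n) (heq ▸ hmem k)
  have hunion : ⋃ n : ℤ, lift n ⁻¹' s = (↑) '' s := by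
    ext x
    simp only [mem_iUnion, mem_preimage]
    constructor
    · rintro ⟨n, hx⟩
      exact ⟨lift n x, hx, hcoe n x⟩
    · rintro ⟨u, hu, rfl⟩
      obtain ⟨n, hn⟩ := mem_iUnion.1 ((iUnion_Ioc_zsmul (Fact.out : 0 < p)).symm ▸ mem_univ u)
      rw [add_one_zsmul] at hn
      exact ⟨n, by simpa only [lift, AddCircle.equivIoc_coe_of_mem hn] using hu⟩
  rw [← hunion, measure_iUnion hdisj fun n => hlift n hs, periodicExtension,
    Measure.sum_apply _ hs]
  exact tsum_congr fun n => Measure.map_apply (hlift n) hs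

theorem periodicExtension_Ioc {a b : ℝ} (hb : b ≤ a + p) :
    periodicExtension ρ (Ioc a b) = ρ ((↑) '' Ioc a b) :=
  periodicExtension_apply_of_injOn ρ measurableSet_Ioc (injOn_coe_Ioc hb)

theorem periodicExtension_Ioc_period (a : ℝ) :
    periodicExtension ρ (Ioc a (a + p)) = ρ univ := by
  rw [periodicExtension_Ioc ρ le_rfl, AddCircle.coe_image_Ioc_eq]

instance [NullSingletonClass ρ] : NullSingletonClass (periodicExtension ρ) where
  measure_singleton x := by
    rw [periodicExtension_apply_of_injOn ρ (measurableSet_singleton x) (injOn_singleton _ _),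
      image_singleton, measure_singleton]

instance [IsFiniteMeasure ρ] : IsLocallyFiniteMeasure (periodicExtension ρ) where
  finiteAtNhds x := by
    have hp : 0 < p := Fact.out
    refine ⟨Ioc (x - p / 2) (x - p / 2 + p), Ioc_mem_nhds (by linarith) (by linarith), ?_⟩
    rw [periodicExtension_Ioc_period]
    exact measure_lt_top ρ univ

instance [ρ.IsOpenPosMeasure] : (periodicExtension ρ).IsOpenPosMeasure where
  open_pos U hU hne := by
    obtain ⟨x, hx⟩ := hne
    have hp : 0 < p := Fact.out
    let V := U ∩ Ioo (x - p / 2) (x + p / 2)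
    have hVopen : IsOpen V := hU.inter isOpen_Ioo
    have hVinj : InjOn ((↑) : ℝ → AddCircle p) V :=
      (injOn_coe_Ioc (by linarith)).mono (inter_subset_right.trans Ioo_subset_Ioc_self)
    have hVpos : 0 < periodicExtension ρ V := by
      rw [periodicExtension_apply_of_injOn ρ hVopen.measurableSet hVinj]
      exact (QuotientAddGroup.isOpenMap_coe V hVopen).measure_pos ρ
        (Nonempty.image _ ⟨x, hx, by constructor <;> linarith⟩)
    exact (hVpos.trans_le (measure_mono inter_subset_left)).ne'

variable [IsProbabilityMeasure ρ]

/-- The cumulative distribution function of a probability measure on the circle, normalised to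
vanish at `0`, as a lift to `ℝ` of a degree-one map from `AddCircle p` to `UnitAddCircle`. -/
def circleCDF : ℝ →+c[p, 1] ℝ where
  toFun x := ∫ _ in 0..x, (1 : ℝ) ∂periodicExtension ρ
  map_add_const' x := by
    have hint (a b : ℝ) : IntervalIntegrable (fun _ => (1 : ℝ)) (periodicExtension ρ) a b :=
      intervalIntegrable_const
    rw [← intervalIntegral.integral_add_adjacent_intervals (hint 0 x) (hint x (x + p)),
      intervalIntegral.integral_of_le (le_add_of_nonneg_right (Fact.out : 0 < p).le)]
    simp [measureReal_def, periodicExtension_Ioc_period ρ x]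

theorem circleCDF_sub_circleCDF {a b : ℝ} (hab : a ≤ b) :
    circleCDF ρ b - circleCDF ρ a = (periodicExtension ρ).real (Ioc a b) := by
  have hint (a b : ℝ) : IntervalIntegrable (fun _ => (1 : ℝ)) (periodicExtension ρ) a b :=
    intervalIntegrable_const
  change (∫ _ in 0..b, (1 : ℝ) ∂periodicExtension ρ) - ∫ _ in 0..a, (1 : ℝ) ∂periodicExtension ρ = _
  rw [intervalIntegral.integral_interval_sub_left (hint 0 b) (hint 0 a),
    intervalIntegral.integral_of_le hab]
  simp

theorem continuous_circleCDF [NullSingletonClass ρ] : Continuous (circleCDF ρ) :=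
  intervalIntegral.continuous_primitive (fun _ _ => intervalIntegrable_const) 0

theorem strictMono_circleCDF [ρ.IsOpenPosMeasure] : StrictMono (circleCDF ρ) := by
  intro a b hab
  rw [← sub_pos, circleCDF_sub_circleCDF ρ hab.le]
  exact ENNReal.toReal_pos ((isOpen_Ioo.measure_pos _ (nonempty_Ioo.2 hab)).trans_le
    (measure_mono Ioo_subset_Ioc_self)).ne' measure_Ioc_lt_top.ne

theorem periodic_coe_circleCDF :
    Function.Periodic (fun x => (circleCDF ρ x : UnitAddCircle)) p := fun x => by
  simp only [AddConstMapClass.map_add_const, AddCircle.coe_add_period]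

/-- The reparametrisation of the circle by `ρ`-mass: the map with lift `circleCDF ρ`. -/
def massCoordinate : AddCircle p → UnitAddCircle := (periodic_coe_circleCDF ρ).lift

theorem massCoordinate_coe (x : ℝ) : massCoordinate ρ x = (circleCDF ρ x : UnitAddCircle) := rfl

theorem continuous_massCoordinate [NullSingletonClass ρ] : Continuous (massCoordinate ρ) :=
  continuous_coinduced_dom.2 ((AddCircle.continuous_mk' 1).comp (continuous_circleCDF ρ))

theorem exists_coe_prod_eq (z : AddCircle p × AddCircle p) :
    ∃ a b : ℝ, a ≤ b ∧ b < a + p ∧ ((a : AddCircle p), (b : AddCircle p)) = z := by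
  obtain ⟨a, ha⟩ := QuotientAddGroup.mk_surjective z.1
  obtain ⟨b, hb, hbz⟩ := (AddCircle.coe_image_Ico_eq p a).symm ▸ mem_univ z.2
  exact ⟨a, b, hb.1, hb.2, Prod.ext ha hbz⟩

/-- The `ρ`-mass of the anticlockwise arc from `z.1` to `z.2`. -/
def arcMass (z : AddCircle p × AddCircle p) : ℝ :=
  AddCircle.equivIco 1 0 (massCoordinate ρ z.2 - massCoordinate ρ z.1)

theorem arcMass_nonneg (z : AddCircle p × AddCircle p) : 0 ≤ arcMass ρ z :=
  (AddCircle.equivIco 1 0 _).2.1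

theorem arcMass_lt_one (z : AddCircle p × AddCircle p) : arcMass ρ z < 1 :=
  (AddCircle.equivIco 1 0 _).2.2.trans_eq (zero_add 1)

theorem coe_arcMass (z : AddCircle p × AddCircle p) :
    (arcMass ρ z : UnitAddCircle) = massCoordinate ρ z.2 - massCoordinate ρ z.1 :=
  AddCircle.coe_equivIco

theorem measurable_arcMass [NullSingletonClass ρ] : Measurable (arcMass ρ) :=
  measurable_subtype_coe.comp <| (AddCircle.measurableEquivIco 1 0).measurable.comp <|
    (((continuous_massCoordinate ρ).comp continuous_snd).sub
      ((continuous_massCoordinate ρ).comp continuous_fst)).measurable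

theorem arcMass_coe [ρ.IsOpenPosMeasure] {a b : ℝ} (hab : a ≤ b) (hb : b < a + p) :
    arcMass ρ ((a : AddCircle p), (b : AddCircle p)) = circleCDF ρ b - circleCDF ρ a := by
  have hmem : circleCDF ρ b - circleCDF ρ a ∈ Ico (0 : ℝ) (0 + 1) := by
    have hlt := strictMono_circleCDF ρ hb
    rw [AddConstMapClass.map_add_const] at hlt
    exact ⟨sub_nonneg.2 ((strictMono_circleCDF ρ).monotone hab), by linarith⟩
  rw [arcMass, massCoordinate_coe, massCoordinate_coe, ← AddCircle.coe_sub,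
    AddCircle.equivIco_coe_of_mem hmem]

theorem arcMass_coe_eq_measureReal [ρ.IsOpenPosMeasure] {a b : ℝ} (hab : a ≤ b) (hb : b < a + p) :
    arcMass ρ ((a : AddCircle p), (b : AddCircle p)) = ρ.real ((↑) '' Ioc a b) := by
  rw [arcMass_coe ρ hab hb, circleCDF_sub_circleCDF ρ hab, measureReal_def, measureReal_def,
    periodicExtension_Ioc ρ hb.le]

theorem arcMass_eq_zero_iff [ρ.IsOpenPosMeasure] {z : AddCircle p × AddCircle p} :
    arcMass ρ z = 0 ↔ z.1 = z.2 := by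
  obtain ⟨a, b, hab, hb, rfl⟩ := exists_coe_prod_eq z
  have hmem {x : ℝ} (h : x ∈ Icc a b) : x ∈ Ico a (a + p) := ⟨h.1, h.2.trans_lt hb⟩
  rw [arcMass_coe ρ hab hb, sub_eq_zero, (strictMono_circleCDF ρ).injective.eq_iff,
    AddCircle.coe_eq_coe_iff_of_mem_Ico (hmem (left_mem_Icc.2 hab)) (hmem (right_mem_Icc.2 hab)),
    eq_comm]

/-- The product of the `ρ`-masses of the two arcs into which `z.1` and `z.2` cut the circle. -/
def arcMassProduct (z : AddCircle p × AddCircle p) : ℝ := arcMass ρ z * (1 - arcMass ρ z)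

theorem arcMassProduct_nonneg (z : AddCircle p × AddCircle p) : 0 ≤ arcMassProduct ρ z :=
  mul_nonneg (arcMass_nonneg ρ z) (sub_nonneg.2 (arcMass_lt_one ρ z).le)

theorem arcMassProduct_eq_zero_iff [ρ.IsOpenPosMeasure] {z : AddCircle p × AddCircle p} :
    arcMassProduct ρ z = 0 ↔ z.1 = z.2 := by
  rw [arcMassProduct, mul_eq_zero, or_iff_left (sub_pos.2 (arcMass_lt_one ρ z)).ne',
    arcMass_eq_zero_iff]

theorem arcMassProduct_eq_norm (z : AddCircle p × AddCircle p) :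
    arcMassProduct ρ z = ‖massCoordinate ρ z.2 - massCoordinate ρ z.1‖ *
      (1 - ‖massCoordinate ρ z.2 - massCoordinate ρ z.1‖) := by
  have hfract : Int.fract (arcMass ρ z) = arcMass ρ z :=
    Int.fract_eq_self.2 ⟨arcMass_nonneg ρ z, arcMass_lt_one ρ z⟩
  rw [← coe_arcMass, UnitAddCircle.norm_eq, abs_sub_round_eq_min, hfract, arcMassProduct]
  rcases le_total (arcMass ρ z) (1 - arcMass ρ z) with h | h
  · rw [min_eq_left h]
  · rw [min_eq_right h]
    ring

theorem continuous_arcMassProduct [NullSingletonClass ρ] : Continuous (arcMassProduct ρ) := by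
  have hnorm : Continuous fun z : AddCircle p × AddCircle p =>
      ‖massCoordinate ρ z.2 - massCoordinate ρ z.1‖ :=
    (((continuous_massCoordinate ρ).comp continuous_snd).sub
      ((continuous_massCoordinate ρ).comp continuous_fst)).norm
  exact (hnorm.mul (continuous_const.sub hnorm)).congr fun z => (arcMassProduct_eq_norm ρ z).symm

end ArcMass

namespace RDS

variable {Ω : Type} [MeasurableSpace Ω] (S : RDS Ω)

instance : IsProbabilityMeasure S.P := S.P_prob

theorem natCast_mem_T (n : ℕ) : (n : ℝ) ∈ S.T := by
  rcases S.T_cases with h | h <;> simp [h]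

theorem zero_mem_T : (0 : ℝ) ∈ S.T := by
  simpa using S.natCast_mem_T 0

variable {S}

theorem nonneg_of_mem_T {t : ℝ} (ht : t ∈ S.T) : 0 ≤ t := by
  rcases S.T_cases with h | h <;> rw [h] at ht
  · obtain ⟨k, rfl⟩ := ht
    exact k.cast_nonneg
  · exact ht

theorem add_mem_T {s t : ℝ} (hs : s ∈ S.T) (ht : t ∈ S.T) : s + t ∈ S.T := by
  rcases S.T_cases with h | h <;> rw [h] at hs ht ⊢
  · obtain ⟨j, rfl⟩ := hs
    obtain ⟨k, rfl⟩ := ht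
    exact ⟨j + k, Nat.cast_add j k⟩
  · exact add_nonneg (mem_Ici.1 hs) (mem_Ici.1 ht)

theorem sub_mem_T {s t : ℝ} (hs : s ∈ S.T) (ht : t ∈ S.T) (hst : s ≤ t) : t - s ∈ S.T := by
  rcases S.T_cases with h | h <;> rw [h] at hs ht ⊢
  · obtain ⟨j, rfl⟩ := hs
    obtain ⟨k, rfl⟩ := ht
    exact ⟨k - j, Nat.cast_sub (Nat.cast_le.1 hst)⟩
  · exact sub_nonneg.2 hst

variable (S) in
/-- The rational times, a countable set from which closed properties of right-continuous paths
extend to all times. -/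
def ratTimes : Set ℝ := S.T ∩ range ((↑) : ℚ → ℝ)

theorem ratTimes_subset_T : S.ratTimes ⊆ S.T := inter_subset_left

variable (S) in
theorem countable_ratTimes : S.ratTimes.Countable := (countable_range _).mono inter_subset_right

theorem exists_antitone_ratTimes_tendsto {t : ℝ} (ht : t ∈ S.T) :
    ∃ u : ℕ → ℝ, Antitone u ∧ (∀ n, u n ∈ S.ratTimes) ∧ Tendsto u atTop (𝓝 t) := by
  rcases S.T_cases with h | h
  · obtain ⟨k, rfl⟩ := h ▸ ht
    exact ⟨fun _ => k, antitone_const, fun _ => ⟨S.natCast_mem_T k, k, Rat.cast_natCast k⟩,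
      tendsto_const_nhds⟩
  · obtain ⟨u, hanti, hu, hlim⟩ := Dense.exists_seq_strictAnti_tendsto Rat.denseRange_cast t
    have ht0 : 0 ≤ t := by simpa [h] using ht
    refine ⟨u, hanti.antitone, fun n => ⟨?_, (hu n).2⟩, hlim⟩
    rw [h]
    exact ht0.trans (hu n).1.le

variable (S) in
theorem Fplus_le : S.Fplus ≤ ‹MeasurableSpace Ω› := iSup₂_le S.F_le

theorem measurable_θ_Fplus {s : ℝ} (hs : s ∈ S.T) : Measurable[_, S.Fplus] (S.θ s) :=
  (S.θ_preserving s hs).measurable.mono le_rfl S.Fplus_le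

theorem F_le_Fplus {t : ℝ} (ht : t ∈ S.T) : S.F t ≤ S.Fplus := le_iSup₂_of_le t ht le_rfl

section TwoPoint

variable (S) in
/-- The two-point motion: the diagonal action of `φ t ω` on pairs of points. -/
def twoPoint (t : ℝ) (ω : Ω) : UnitAddCircle × UnitAddCircle → UnitAddCircle × UnitAddCircle :=
  Prod.map (S.φ t ω) (S.φ t ω)

@[simp]
theorem twoPoint_zero (ω : Ω) (z : UnitAddCircle × UnitAddCircle) : S.twoPoint 0 ω z = z := by
  simp [twoPoint, S.φ_zero]

theorem twoPoint_add {s t : ℝ} (hs : s ∈ S.T) (ht : t ∈ S.T) (ω : Ω)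
    (z : UnitAddCircle × UnitAddCircle) :
    S.twoPoint (s + t) ω z = S.twoPoint t (S.θ s ω) (S.twoPoint s ω z) :=
  Prod.ext (S.φ_cocycle s hs t ht ω z.1) (S.φ_cocycle s hs t ht ω z.2)

theorem twoPoint_sub {s t : ℝ} (hs : s ∈ S.T) (ht : t ∈ S.T) (hst : s ≤ t) (ω : Ω)
    (z : UnitAddCircle × UnitAddCircle) :
    S.twoPoint (t - s) (S.θ s ω) (S.twoPoint s ω z) = S.twoPoint t ω z := by
  rw [← twoPoint_add hs (sub_mem_T hs ht hst), add_sub_cancel]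

theorem continuous_twoPoint (t : ℝ) (ω : Ω) : Continuous (S.twoPoint t ω) :=
  (S.φ t ω).continuous.prodMap (S.φ t ω).continuous

theorem measurable_twoPoint_F {t : ℝ} (ht : t ∈ S.T) :
    Measurable[(S.F t).prod inferInstance] fun p : Ω × (UnitAddCircle × UnitAddCircle) =>
      S.twoPoint t p.1 p.2 :=
  measurable_prodMap_uncurry (f := fun ω x => S.φ t ω x) (S.φ_meas t ht)

theorem measurable_twoPoint_Fplus {t : ℝ} (ht : t ∈ S.T) :
    Measurable[S.Fplus.prod inferInstance] fun p : Ω × (UnitAddCircle × UnitAddCircle) =>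
      S.twoPoint t p.1 p.2 :=
  (measurable_twoPoint_F ht).mono
    (sup_le_sup (MeasurableSpace.comap_mono (F_le_Fplus ht)) le_rfl) le_rfl

theorem measurable_twoPoint_apply {t : ℝ} (ht : t ∈ S.T) (z : UnitAddCircle × UnitAddCircle) :
    Measurable fun ω => S.twoPoint t ω z :=
  ((measurable_twoPoint_F ht).comp (@measurable_prodMk_right _ _ (S.F t) _ z)).mono (S.F_le t ht)
    le_rfl

theorem twoPoint_mem_of_forall_ratTimes {K : Set (UnitAddCircle × UnitAddCircle)}
    (hK : IsClosed K) {ω : Ω} {z : UnitAddCircle × UnitAddCircle}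
    (h : ∀ t ∈ S.ratTimes, S.twoPoint t ω z ∈ K) {t : ℝ} (ht : t ∈ S.T) :
    S.twoPoint t ω z ∈ K := by
  obtain ⟨u, hanti, hu, hlim⟩ := exists_antitone_ratTimes_tendsto ht
  have hright (x : UnitAddCircle) : Tendsto (fun n => S.φ (u n) ω x) atTop (𝓝 (S.φ t ω x)) :=
    S.φ_cadlag_right ω t ht u (fun n => ratTimes_subset_T (hu n)) hanti hlim _ x
      tendsto_const_nhds
  exact hK.mem_of_tendsto ((hright z.1).prodMk_nhds (hright z.2))
    (Eventually.of_forall fun n => h _ (hu n))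

theorem Contractible.exists_diag_mem (hS : S.Contractible)
    {K : Set (UnitAddCircle × UnitAddCircle)} (hK : IsClosed K) (hne : K.Nonempty)
    (hinv : ∀ t ∈ S.T, ∀ z ∈ K, ∀ᵐ ω ∂S.P, S.twoPoint t ω z ∈ K) : ∃ x, (x, x) ∈ K := by
  obtain ⟨⟨x, y⟩, hxy, hmin⟩ := hK.isCompact.exists_isMinOn hne continuous_dist.continuousOn
  rcases eq_or_ne x y with rfl | hxy_ne
  · exact ⟨x, hxy⟩
  have hstay : ∀ᵐ ω ∂S.P, ∀ t ∈ S.ratTimes, S.twoPoint t ω (x, y) ∈ K :=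
    (ae_ball_iff S.countable_ratTimes).2 fun t ht => hinv t (ratTimes_subset_T ht) _ hxy
  have hnull : S.P {ω | ∃ t ∈ S.T, dist (S.φ t ω x) (S.φ t ω y) < dist x y} = 0 := by
    rw [measure_eq_zero_iff_ae_notMem]
    filter_upwards [hstay] with ω hω
    rintro ⟨t, ht, hlt⟩
    have hle := isMinOn_iff.1 hmin _ (twoPoint_mem_of_forall_ratTimes hK hω ht)
    exact hlt.not_ge hle
  exact absurd hnull (hS x y hxy_ne).ne'

theorem indepFun_θ_twoPoint {s : ℝ} (hs : s ∈ S.T) (z : UnitAddCircle × UnitAddCircle) :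
    @IndepFun Ω Ω _ _ S.Fplus _ (S.θ s) (fun ω => S.twoPoint s ω z) S.P := by
  refine (indepFun_iff_measure_inter_preimage_eq_mul (mβ := S.Fplus)).2 fun A B hA hB => ?_
  have hpast : MeasurableSet[S.F s] ((fun ω => S.twoPoint s ω z) ⁻¹' B) :=
    (measurable_twoPoint_F hs).comp (@measurable_prodMk_right _ _ (S.F s) _ z) hB
  rw [inter_comm, S.θ_indep s hs _ A hpast hA, mul_comm,
    (S.θ_preserving s hs).measure_preimage (S.Fplus_le A hA).nullMeasurableSet]

theorem lintegral_θ_twoPoint {s : ℝ} (hs : s ∈ S.T) (z : UnitAddCircle × UnitAddCircle)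
    {H : Ω × (UnitAddCircle × UnitAddCircle) → ℝ≥0∞}
    (hH : Measurable[S.Fplus.prod inferInstance] H) :
    ∫⁻ ω, H (S.θ s ω, S.twoPoint s ω z) ∂S.P =
      ∫⁻ ω, ∫⁻ ω', H (ω', S.twoPoint s ω z) ∂S.P ∂S.P := by
  rw [lintegral_prodMk_of_indepFun (mα := S.Fplus) (indepFun_θ_twoPoint hs z)
    (measurable_θ_Fplus hs) (measurable_twoPoint_apply hs z) hH]
  refine lintegral_congr fun ω => ?_
  have hsection : Measurable fun ω' => H (ω', S.twoPoint s ω z) :=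
    (hH.comp (@measurable_prodMk_right _ _ S.Fplus _ _)).mono S.Fplus_le le_rfl
  exact (S.θ_preserving s hs).lintegral_comp hsection

theorem measure_θ_twoPoint {s : ℝ} (hs : s ∈ S.T) (z : UnitAddCircle × UnitAddCircle)
    {E : Set (Ω × (UnitAddCircle × UnitAddCircle))}
    (hE : MeasurableSet[S.Fplus.prod inferInstance] E) :
    S.P {ω | (S.θ s ω, S.twoPoint s ω z) ∈ E} =
      ∫⁻ ω, S.P {ω' | (ω', S.twoPoint s ω z) ∈ E} ∂S.P := by
  have hind : Measurable[S.Fplus.prod inferInstance] (E.indicator fun _ => (1 : ℝ≥0∞)) :=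
    (@measurable_const _ _ _ (S.Fplus.prod inferInstance) _).indicator hE
  have hsection (y : UnitAddCircle × UnitAddCircle) : MeasurableSet {ω | (ω, y) ∈ E} :=
    S.Fplus_le _ (@measurable_prodMk_right _ _ S.Fplus _ y E hE)
  have hpreimage : MeasurableSet {ω | (S.θ s ω, S.twoPoint s ω z) ∈ E} :=
    (measurable_θ_Fplus hs).prodMk (measurable_twoPoint_apply hs z) hE
  have hshift := lintegral_θ_twoPoint hs z hind
  simp only [← lintegral_indicator_one (hsection _), ← lintegral_indicator_one hpreimage]
  exact hshift

end TwoPoint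

section Excessive

variable (S) in
/-- The transition operator `V ↦ (z ↦ 𝔼 V(Φ_t z))` of the two-point motion `Φ`. -/
def twoPointMean (V : UnitAddCircle × UnitAddCircle → ℝ≥0∞) (t : ℝ)
    (z : UnitAddCircle × UnitAddCircle) : ℝ≥0∞ := ∫⁻ ω, V (S.twoPoint t ω z) ∂S.P

variable (S) in
/-- `V` is excessive for the two-point motion: it does not increase in mean. -/
def IsExcessive (V : UnitAddCircle × UnitAddCircle → ℝ≥0∞) : Prop :=
  ∀ t ∈ S.T, ∀ z, S.twoPointMean V t z ≤ V z

variable {V : UnitAddCircle × UnitAddCircle → ℝ≥0∞}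

@[simp]
theorem twoPointMean_zero (z : UnitAddCircle × UnitAddCircle) : S.twoPointMean V 0 z = V z := by
  simp [twoPointMean]

theorem twoPointMean_add (hV : Measurable V) {s t : ℝ} (hs : s ∈ S.T) (ht : t ∈ S.T)
    (z : UnitAddCircle × UnitAddCircle) :
    S.twoPointMean V (s + t) z = S.twoPointMean (S.twoPointMean V t) s z := by
  simp only [twoPointMean, twoPoint_add hs ht]
  exact lintegral_θ_twoPoint hs z (hV.comp (measurable_twoPoint_Fplus ht))

theorem continuous_twoPointMean (hV : Continuous V) (hfin : ∀ z, V z ≠ ∞) {t : ℝ} (ht : t ∈ S.T) :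
    Continuous (S.twoPointMean V t) := by
  obtain ⟨w, -, hw⟩ := isCompact_univ.exists_isMaxOn univ_nonempty hV.continuousOn
  refine continuous_iff_continuousAt.2 fun z =>
    tendsto_lintegral_filter_of_dominated_convergence (fun _ => V w)
      (Eventually.of_forall fun y => hV.measurable.comp (measurable_twoPoint_apply ht y))
      (Eventually.of_forall fun y => ae_of_all _ fun ω => hw (mem_univ _)) ?_
      (ae_of_all _ fun ω => (hV.comp (continuous_twoPoint t ω)).tendsto z)
  simpa using hfin w

variable (S V) in
/-- The event that `V` exceeds the level `l` along the two-point motion at one of the times in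
`D`, as a set of pairs consisting of a noise realisation and an initial condition. -/
def exceedance (l : ℝ≥0∞) (D : Set ℝ) : Set (Ω × (UnitAddCircle × UnitAddCircle)) :=
  {p | ∃ t ∈ D, l < V (S.twoPoint t p.1 p.2)}

theorem measurableSet_exceedance (hV : Measurable V) {l : ℝ≥0∞} {D : Set ℝ} (hDT : D ⊆ S.T)
    (hD : D.Countable) : MeasurableSet[S.Fplus.prod inferInstance] (S.exceedance V l D) := by
  have hunion : S.exceedance V l D = ⋃ t ∈ D, {p | l < V (S.twoPoint t p.1 p.2)} := by
    ext
    simp [exceedance]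
  rw [hunion]
  exact .biUnion hD fun t ht => hV.comp (measurable_twoPoint_Fplus (hDT ht)) measurableSet_Ioi

theorem setOf_mem_exceedance_image_sub {l : ℝ≥0∞} {r a : ℝ} (hr : r ∈ S.T) (ha : a ∈ S.T)
    (hra : r ≤ a) {D : Set ℝ} (hD : (· - a) '' D ⊆ S.T) (z : UnitAddCircle × UnitAddCircle) :
    {ω | (ω, z) ∈ S.exceedance V l ((· - r) '' D)} =
      {ω | (S.θ (a - r) ω, S.twoPoint (a - r) ω z) ∈ S.exceedance V l ((· - a) '' D)} := by
  ext ω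
  simp only [exceedance, mem_ofPred_eq, exists_mem_image]
  refine exists_congr fun t => and_congr_right fun ht => ?_
  rw [← twoPoint_add (sub_mem_T hr ha hra) (hD ⟨t, ht, rfl⟩), add_comm, sub_add_sub_cancel]

theorem measure_θ_twoPoint_le (hV : Measurable V) {l : ℝ≥0∞}
    {E : Set (Ω × (UnitAddCircle × UnitAddCircle))}
    (hE : MeasurableSet[S.Fplus.prod inferInstance] E) {s : ℝ} (hs : s ∈ S.T)
    (hbound : ∀ y, S.P {ω | (ω, y) ∈ E} ≤ V y / l) (z : UnitAddCircle × UnitAddCircle) :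
    S.P {ω | (S.θ s ω, S.twoPoint s ω z) ∈ E} ≤ S.twoPointMean V s z / l :=
  calc S.P {ω | (S.θ s ω, S.twoPoint s ω z) ∈ E}
      = ∫⁻ ω, S.P {ω' | (ω', S.twoPoint s ω z) ∈ E} ∂S.P := measure_θ_twoPoint hs z hE
    _ ≤ ∫⁻ ω, V (S.twoPoint s ω z) / l ∂S.P := lintegral_mono fun ω => hbound _
    _ = S.twoPointMean V s z / l := by
      have hmeas : Measurable fun ω => V (S.twoPoint s ω z) :=
        hV.comp (measurable_twoPoint_apply hs z)
      simp only [div_eq_mul_inv, lintegral_mul_const _ hmeas, twoPointMean]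

namespace IsExcessive

theorem twoPointMean_le (h : S.IsExcessive V) (hV : Measurable V) {s t : ℝ} (hs : s ∈ S.T)
    (ht : t ∈ S.T) (hst : s ≤ t) (z : UnitAddCircle × UnitAddCircle) :
    S.twoPointMean V t z ≤ S.twoPointMean V s z := by
  rw [← add_sub_cancel s t, twoPointMean_add hV hs (sub_mem_T hs ht hst)]
  exact lintegral_mono fun ω => h _ (sub_mem_T hs ht hst) _

theorem antitone_twoPointMean_natCast (h : S.IsExcessive V) (hV : Measurable V)
    (z : UnitAddCircle × UnitAddCircle) : Antitone fun n : ℕ => S.twoPointMean V n z :=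
  fun j k hjk => h.twoPointMean_le hV (S.natCast_mem_T j) (S.natCast_mem_T k) (Nat.cast_le.2 hjk) z

theorem iInf_twoPointMean_le (h : S.IsExcessive V) (hV : Continuous V) (hfin : ∀ z, V z ≠ ∞)
    {t : ℝ} (ht : t ∈ S.T) (z : UnitAddCircle × UnitAddCircle) :
    ⨅ n : ℕ, S.twoPointMean V n z ≤
      S.twoPointMean (fun y => ⨅ n : ℕ, S.twoPointMean V n y) t z := by
  have hmeas (n : ℕ) : Measurable fun ω => S.twoPointMean V n (S.twoPoint t ω z) :=
    (continuous_twoPointMean hV hfin (S.natCast_mem_T n)).measurable.comp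
      (measurable_twoPoint_apply ht z)
  have hshift (n : ℕ) : ∫⁻ ω, S.twoPointMean V n (S.twoPoint t ω z) ∂S.P =
      S.twoPointMean V (t + n) z :=
    (twoPointMean_add hV.measurable ht (S.natCast_mem_T n) z).symm
  have hzero : ∫⁻ ω, S.twoPointMean V (0 : ℕ) (S.twoPoint t ω z) ∂S.P ≠ ∞ := by
    rw [hshift 0]
    exact ne_top_of_le_ne_top (hfin z) (h _ (add_mem_T ht (S.natCast_mem_T 0)) z)
  have hanti : Antitone fun (n : ℕ) ω => S.twoPointMean V n (S.twoPoint t ω z) :=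
    fun j k hjk ω => h.antitone_twoPointMean_natCast hV.measurable _ hjk
  rw [twoPointMean, lintegral_iInf hmeas hanti hzero]
  refine le_iInf fun n => ?_
  obtain ⟨N, hN⟩ := exists_nat_ge (t + n)
  rw [hshift n]
  exact (iInf_le _ N).trans (h.twoPointMean_le hV.measurable (add_mem_T ht (S.natCast_mem_T n))
    (S.natCast_mem_T N) hN z)

theorem iInf_twoPointMean_eq_zero (h : S.IsExcessive V) (hV : Continuous V)
    (hfin : ∀ z, V z ≠ ∞) (hdiag : ∀ x, V (x, x) = 0) (hS : S.Contractible)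
    (z : UnitAddCircle × UnitAddCircle) : ⨅ n : ℕ, S.twoPointMean V n z = 0 := by
  let u (z : UnitAddCircle × UnitAddCircle) : ℝ≥0∞ := ⨅ n : ℕ, S.twoPointMean V n z
  have husc : UpperSemicontinuous u := upperSemicontinuous_iInf fun n =>
    (continuous_twoPointMean hV hfin (S.natCast_mem_T n)).upperSemicontinuous
  have huV (z : UnitAddCircle × UnitAddCircle) : u z ≤ V z :=
    (iInf_le _ 0).trans_eq (by rw [Nat.cast_zero, twoPointMean_zero])
  obtain ⟨w, -, hmax⟩ := (husc.upperSemicontinuousOn univ).exists_isMaxOn univ_nonempty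
    isCompact_univ
  have hle (y : UnitAddCircle × UnitAddCircle) : u y ≤ u w := hmax (mem_univ y)
  have hinv : ∀ t ∈ S.T, ∀ y ∈ u ⁻¹' Ici (u w), ∀ᵐ ω ∂S.P,
      S.twoPoint t ω y ∈ u ⁻¹' Ici (u w) := by
    intro t ht y hy
    have hint : ∫⁻ ω, u (S.twoPoint t ω y) ∂S.P ≠ ∞ :=
      ne_top_of_le_ne_top (hfin y) ((lintegral_mono fun ω => huV _).trans (h t ht y))
    have heq : (fun ω => u (S.twoPoint t ω y)) =ᵐ[S.P] fun _ => u w := by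
      refine ae_eq_of_ae_le_of_lintegral_le (ae_of_all _ fun ω => hle _) hint
        aemeasurable_const ?_
      rw [lintegral_const, measure_univ, mul_one]
      exact (mem_Ici.1 hy).trans (h.iInf_twoPointMean_le hV hfin ht y)
    exact heq.mono fun ω hω => hω.ge
  obtain ⟨x, hx⟩ := hS.exists_diag_mem (husc.isClosed_preimage (u w)) ⟨w, le_refl (u w)⟩ hinv
  exact le_antisymm ((hle z).trans (hx.trans ((huV _).trans_eq (hdiag x)))) bot_le

-- Measuring time from an arbitrary `r` lets the induction on `s` restart the two-point motion at
-- the earliest time: either `V` already exceeds `l` there, or that time can be discarded.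
theorem measure_exceedance_finset_le (h : S.IsExcessive V) (hV : Measurable V) (l : ℝ≥0∞)
    (s : Finset ℝ) (hs : ↑s ⊆ S.T) {r : ℝ} (hr : r ∈ S.T) (hrs : ∀ t ∈ s, r ≤ t)
    (z : UnitAddCircle × UnitAddCircle) :
    S.P {ω | (ω, z) ∈ S.exceedance V l ((· - r) '' s)} ≤ V z / l := by
  induction s using Finset.induction_on_min generalizing r z with
  | empty => simp [exceedance]
  | insert a s has ih =>
    have haT : a ∈ S.T := hs (Finset.mem_insert_self a s)
    have hra : r ≤ a := hrs a (Finset.mem_insert_self a s)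
    have hshiftT : (· - a) '' (insert a s : Finset ℝ) ⊆ S.T := by
      rintro _ ⟨t, ht, rfl⟩
      refine sub_mem_T haT (hs ht) ?_
      rcases Finset.mem_insert.1 ht with rfl | ht
      exacts [le_rfl, (has t ht).le]
    have hbound (y : UnitAddCircle × UnitAddCircle) :
        S.P {ω | (ω, y) ∈ S.exceedance V l ((· - a) '' (insert a s : Finset ℝ))} ≤ V y / l := by
      rcases le_or_gt (V y) l with hy | hy
      · refine (measure_mono ?_).trans
          (ih ((Finset.coe_subset.2 (Finset.subset_insert a s)).trans hs) haT
            (fun t ht => (has t ht).le) y)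
        rintro ω ⟨_, ⟨t, ht, rfl⟩, hlt⟩
        rcases Finset.mem_insert.1 ht with rfl | ht
        · exact absurd hy (by simpa using hlt)
        · exact ⟨_, ⟨t, ht, rfl⟩, hlt⟩
      · refine prob_le_one.trans ?_
        rw [ENNReal.le_div_iff_mul_le (.inr (bot_le.trans_lt hy).ne') (.inl hy.ne_top), one_mul]
        exact hy.le
    rw [setOf_mem_exceedance_image_sub hr haT hra hshiftT]
    exact (measure_θ_twoPoint_le hV (measurableSet_exceedance hV hshiftT
      ((Finset.countable_toSet _).image _)) (sub_mem_T hr haT hra) hbound z).trans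
      (ENNReal.div_le_div_right (h _ (sub_mem_T hr haT hra) z) l)

theorem measure_exceedance_le (h : S.IsExcessive V) (hV : Measurable V) (l : ℝ≥0∞) {D : Set ℝ}
    (hD : D.Countable) (hDT : D ⊆ S.T) (z : UnitAddCircle × UnitAddCircle) :
    S.P {ω | (ω, z) ∈ S.exceedance V l D} ≤ V z / l := by
  have := hD.to_subtype
  have hunion : {ω | (ω, z) ∈ S.exceedance V l D} =
      ⋃ s : Finset D, {ω | (ω, z) ∈ S.exceedance V l (Subtype.val '' (s : Set D))} := by
    ext ω
    simp only [exceedance, mem_ofPred_eq, mem_iUnion, exists_mem_image]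
    exact ⟨fun ⟨t, ht, hlt⟩ => ⟨{⟨t, ht⟩}, ⟨t, ht⟩, by simp, hlt⟩,
      fun ⟨_, t, _, hlt⟩ => ⟨t, t.2, hlt⟩⟩
  have hmono : Monotone fun s : Finset D =>
      {ω | (ω, z) ∈ S.exceedance V l (Subtype.val '' (s : Set D))} :=
    fun s s' hss' ω ⟨t, ht, hlt⟩ => ⟨t, image_mono (Finset.coe_subset.2 hss') ht, hlt⟩
  rw [hunion, hmono.directed_le.measure_iUnion]
  refine iSup_le fun s => ?_
  have hfin := h.measure_exceedance_finset_le hV l (s.map (.subtype _))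
    (by simpa using (Subtype.coe_image_subset D s).trans hDT) S.zero_mem_T
    (by
      simp only [Finset.mem_map]
      rintro _ ⟨t, -, rfl⟩
      exact nonneg_of_mem_T (hDT t.2)) z
  simpa using hfin

theorem ae_exists_forall_ratTimes_le (h : S.IsExcessive V) (hV : Measurable V) {l : ℝ≥0∞}
    (hl : l ≠ 0) {z : UnitAddCircle × UnitAddCircle}
    (hlim : Tendsto (fun n : ℕ => S.twoPointMean V n z) atTop (𝓝 0)) :
    ∀ᵐ ω ∂S.P, ∃ n : ℕ, ∀ t ∈ S.ratTimes,
      V (S.twoPoint t (S.θ n ω) (S.twoPoint n ω z)) ≤ l := by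
  let E := S.exceedance V l S.ratTimes
  have hE : MeasurableSet[S.Fplus.prod inferInstance] E :=
    measurableSet_exceedance hV ratTimes_subset_T S.countable_ratTimes
  have hbound (n : ℕ) : S.P {ω | ∀ k : ℕ, (S.θ k ω, S.twoPoint k ω z) ∈ E} ≤
      S.twoPointMean V n z / l :=
    (measure_mono (ofPred_subset_ofPred.2 fun ω hω => hω n)).trans <|
      measure_θ_twoPoint_le hV hE (S.natCast_mem_T n)
        (h.measure_exceedance_le hV l S.countable_ratTimes ratTimes_subset_T) z
  have hlim_div : Tendsto (fun n : ℕ => S.twoPointMean V n z / l) atTop (𝓝 0) := by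
    simpa using ENNReal.Tendsto.div_const hlim (.inr hl)
  have hnull : S.P {ω | ∀ k : ℕ, (S.θ k ω, S.twoPoint k ω z) ∈ E} = 0 :=
    le_antisymm (ge_of_tendsto' hlim_div hbound) bot_le
  filter_upwards [measure_eq_zero_iff_ae_notMem.1 hnull] with ω hω
  simpa [E, exceedance] using hω

theorem ae_tendsto_twoPoint (h : S.IsExcessive V) (hV : Continuous V)
    {z : UnitAddCircle × UnitAddCircle}
    (hlim : Tendsto (fun n : ℕ => S.twoPointMean V n z) atTop (𝓝 0)) :
    ∀ᵐ ω ∂S.P, Tendsto (fun t => V (S.twoPoint t ω z)) S.tFilter (𝓝 0) := by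
  have hlevel : ∀ᵐ ω ∂S.P, ∀ i : ℕ, ∃ n : ℕ, ∀ t ∈ S.ratTimes,
      V (S.twoPoint t (S.θ n ω) (S.twoPoint n ω z)) ≤ (i : ℝ≥0∞)⁻¹ :=
    ae_all_iff.2 fun i => h.ae_exists_forall_ratTimes_le hV.measurable
      (ENNReal.inv_ne_zero.2 (ENNReal.natCast_ne_top i)) hlim
  filter_upwards [hlevel] with ω hω
  refine ENNReal.tendsto_nhds_zero.2 fun ε hε => ?_
  obtain ⟨i, hi⟩ := ENNReal.exists_inv_nat_lt hε.ne'
  obtain ⟨n, hn⟩ := hω i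
  rw [tFilter, eventually_inf_principal]
  filter_upwards [eventually_ge_atTop (n : ℝ)] with t hnt ht
  have hmem : S.twoPoint (t - n) (S.θ n ω) (S.twoPoint n ω z) ∈ V ⁻¹' Iic (i : ℝ≥0∞)⁻¹ :=
    twoPoint_mem_of_forall_ratTimes (isClosed_Iic.preimage hV) hn
      (sub_mem_T (S.natCast_mem_T n) ht hnt)
  rw [twoPoint_sub (S.natCast_mem_T n) ht hnt] at hmem
  exact hmem.trans hi.le

theorem synchronising (h : S.IsExcessive V) (hV : Continuous V) (hfin : ∀ z, V z ≠ ∞)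
    (hdiag : ∀ z, V z = 0 ↔ z.1 = z.2) (hS : S.Contractible) : S.Synchronising := by
  intro x y
  have hlim : Tendsto (fun n : ℕ => S.twoPointMean V n (x, y)) atTop (𝓝 0) := by
    rw [← h.iInf_twoPointMean_eq_zero hV hfin (fun x => (hdiag (x, x)).2 rfl) hS (x, y)]
    exact tendsto_atTop_iInf (h.antitone_twoPointMean_natCast hV.measurable _)
  have hsync : ∀ᵐ ω ∂S.P, Tendsto (fun t => dist (S.φ t ω x) (S.φ t ω y)) S.tFilter (𝓝 0) :=
    (h.ae_tendsto_twoPoint hV hlim).mono fun ω =>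
      tendsto_dist_of_tendsto_nhds hV fun z hz => (hdiag z).1 hz
  exact (measure_congr (eventuallyEq_univ.2 hsync)).trans measure_univ

end IsExcessive

end Excessive

end RDS

section OrientPreserving

theorem OrientPreserving.exists_orderIso {h : UnitAddCircle ≃ₜ UnitAddCircle}
    (hh : OrientPreserving h) :
    ∃ F : ℝ ≃o ℝ, (∀ x, F (x + 1) = F x + 1) ∧
      ∀ x : ℝ, h (x : UnitAddCircle) = (F x : UnitAddCircle) := by
  obtain ⟨F, hmono, hperiod, hlift⟩ := hh
  let F₁ : ℝ →+c[1, 1] ℝ := ⟨F, hperiod⟩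
  have hsurj : Function.Surjective F := by
    intro y
    obtain ⟨x, hx⟩ := QuotientAddGroup.mk_surjective (h.symm y)
    have hFx : (F x : UnitAddCircle) = y := by
      rw [← h.apply_symm_apply (y : UnitAddCircle), ← hx]
      exact (hlift x).symm
    obtain ⟨n, hn⟩ := (AddCircle.coe_eq_zero_iff 1).1 (sub_eq_zero.2 hFx.symm)
    have hFn : F (x + n • 1) = F x + n • 1 := AddConstMapClass.map_add_zsmul F₁ x n
    exact ⟨x + n • 1, by rw [hFn, hn, add_sub_cancel]⟩
  exact ⟨hmono.orderIsoOfSurjective F hsurj, hperiod, hlift⟩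

variable (ρ : Measure UnitAddCircle) [IsProbabilityMeasure ρ] [ρ.IsOpenPosMeasure]

theorem OrientPreserving.arcMass_map {h : UnitAddCircle ≃ₜ UnitAddCircle}
    (hh : OrientPreserving h) {a b : ℝ} (hab : a ≤ b) (hb : b < a + 1) :
    arcMass ρ (h (a : UnitAddCircle), h (b : UnitAddCircle)) =
      ρ.real (h '' ((↑) '' Ioc a b)) := by
  obtain ⟨F, hperiod, hlift⟩ := hh.exists_orderIso
  have himage : h '' ((↑) '' Ioc a b) = (↑) '' Ioc (F a) (F b) := by
    rw [← F.image_Ioc, image_image, image_image]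
    exact image_congr fun x _ => hlift x
  rw [himage, hlift, hlift, arcMass_coe_eq_measureReal ρ (F.monotone hab)]
  rw [← hperiod]
  exact F.strictMono hb

end OrientPreserving

namespace RDS

variable {Ω : Type} [MeasurableSpace Ω] {S : RDS Ω} {ρ : Measure UnitAddCircle}
  [IsProbabilityMeasure ρ] [NullSingletonClass ρ]

theorem measurable_arcMass_twoPoint {t : ℝ} (ht : t ∈ S.T)
    (z : UnitAddCircle × UnitAddCircle) : Measurable fun ω => arcMass ρ (S.twoPoint t ω z) :=
  (measurable_arcMass ρ).comp (measurable_twoPoint_apply ht z)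

theorem ReverseStationary.integral_arcMass_twoPoint [ρ.IsOpenPosMeasure]
    (hstat : S.ReverseStationary ρ) {t : ℝ} (ht : t ∈ S.T) (z : UnitAddCircle × UnitAddCircle) :
    ∫ ω, arcMass ρ (S.twoPoint t ω z) ∂S.P = arcMass ρ z := by
  obtain ⟨a, b, hab, hb, rfl⟩ := exists_coe_prod_eq z
  have hmap (ω : Ω) : arcMass ρ (S.twoPoint t ω ((a : UnitAddCircle), (b : UnitAddCircle))) =
      ρ.real (S.φ t ω '' ((↑) '' Ioc a b)) := (S.φ_orient t ht ω).arcMass_map ρ hab hb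
  rw [integral_eq_lintegral_of_nonneg_ae (ae_of_all _ fun ω => arcMass_nonneg ρ _)
    (measurable_arcMass_twoPoint ht _).aestronglyMeasurable]
  simp only [hmap, ofReal_measureReal (measure_ne_top ρ _)]
  rw [← hstat t ht _ (measurableSet_coe_image measurableSet_Ioc (injOn_coe_Ioc hb.le)),
    arcMass_coe_eq_measureReal ρ hab hb, measureReal_def]

theorem ReverseStationary.isExcessive_arcMassProduct [ρ.IsOpenPosMeasure]
    (hstat : S.ReverseStationary ρ) :
    S.IsExcessive fun z => ENNReal.ofReal (arcMassProduct ρ z) := by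
  intro t ht z
  have hL2 : MemLp (fun ω => arcMass ρ (S.twoPoint t ω z)) 2 S.P :=
    .of_bound (measurable_arcMass_twoPoint ht z).aestronglyMeasurable 1 <| ae_of_all _ fun ω => by
      rw [Real.norm_of_nonneg (arcMass_nonneg ρ _)]
      exact (arcMass_lt_one ρ _).le
  have hint : Integrable (fun ω => arcMassProduct ρ (S.twoPoint t ω z)) S.P :=
    (hL2.integrable one_le_two).sub hL2.integrable_sq |>.congr <| ae_of_all _ fun ω => by
      simp only [arcMassProduct, Pi.sub_apply]
      ring
  rw [twoPointMean, ← ofReal_integral_eq_lintegral_ofReal hint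
    (ae_of_all _ fun ω => arcMassProduct_nonneg ρ _)]
  refine ENNReal.ofReal_le_ofReal ((integral_mul_one_sub_le hL2).trans_eq ?_)
  rw [hstat.integral_arcMass_twoPoint ht, arcMassProduct]

end RDS

/-- if `φ` is contractible and admits an atomless reverse-stationary probability
measure of full support, then `φ` is synchronising. -/
theorem contractible_atomless_fullSupport_reverseStationary_synchronising
    {Ω : Type} [MeasurableSpace Ω] (S : RDS Ω) (h : S.Contractible)
    (ρ : Measure UnitAddCircle) [IsProbabilityMeasure ρ]
    (hatomless : Atomless ρ) (hfull : FullSupport ρ) (hstat : S.ReverseStationary ρ) :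
    S.Synchronising := by
  have : NullSingletonClass ρ := ⟨hatomless⟩
  have : ρ.IsOpenPosMeasure := ⟨fun U hU hne => (hfull U hU hne).ne'⟩
  refine hstat.isExcessive_arcMassProduct.synchronising
    (ENNReal.continuous_ofReal.comp (continuous_arcMassProduct ρ))
    (fun z => ENNReal.ofReal_ne_top) (fun z => ?_) h
  rw [ENNReal.ofReal_eq_zero, (arcMassProduct_nonneg ρ z).ge_iff_eq', arcMassProduct_eq_zero_iff]
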